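/- For every τ in the complex upper half-plane ℍ, one has (q·d/dq) h(τ) = −E*(2τ)·h(τ) + 64·E_odd(τ). -/

import Mathlib

noncomputable section
open Complex Real

/-- `q = e^{2πiτ}`. -/
def nome (τ : ℂ) : ℂ := Complex.exp (2 * (π : ℂ) * I * τ)

/-- Dedekind eta function `η(τ) = e^{πiτ/12} ∏_{n≥1} (1 − qⁿ)`. -/
def dedekindEta (τ : ℂ) : ℂ :=
  Complex.exp ((π : ℂ) * I * τ / 12) * ∏' n : ℕ, (1 - nome τ ^ (n + 1))

/-- Sum of the positive odd divisors of `n`. -/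
def sigmaOdd (n : ℕ) : ℕ := ∑ d ∈ n.divisors.filter (fun d => Odd d), d

/-- `E*(τ) = 1 + 24 Σ_{n≥1} σ_odd(n) qⁿ`. -/
def Estar (τ : ℂ) : ℂ := 1 + 24 * ∑' n : ℕ, (sigmaOdd (n + 1) : ℂ) * nome τ ^ (n + 1)

/-- `E_odd(τ) = Σ_{n≥0} σ₁(2n+1) q^{2n+1}`. -/
def Eodd (τ : ℂ) : ℂ :=
  ∑' n : ℕ, ((∑ d ∈ (2 * n + 1).divisors, d : ℕ) : ℂ) * nome τ ^ (2 * n + 1)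

/-- `h(τ) = (η(2τ)⁴/η(4τ)⁸)·E*(2τ)`. -/
def hfun (τ : ℂ) : ℂ := dedekindEta (2 * τ) ^ 4 / dedekindEta (4 * τ) ^ 8 * Estar (2 * τ)

/-!
Write `θ = q d/dq`. Since there is no nonzero cusp form of level one and weight less than `12`,
the Eisenstein series `P`, `Q`, `R` of weights `2`, `4`, `6` satisfy Ramanujan's equations
`12 θP = P² - Q`, `3 θQ = PQ - R`, `2 θR = PR - Q²`. The Hecke relation at `2` gives
`P(q) + P(-q) = 6 P(q²) - 4 P(q⁴)` and its analogues for `Q` and `R`. Applying `θ` to these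
repeatedly determines the power sums `P(q)ᵏ + P(-q)ᵏ`, `k ≤ 3`, and Newton's identity between them
is the level two relation `R = 4F³ - 3FQ`, where `F(q) = 2 P(q²) - P(q)` is `E*`. One more
application of `θ` factors as `(5F² - Q - 4 Q(q²)) (4F² - Q) = 0`, and the second factor is `3` at
`q = 0`, so `5F² = Q + 4 Q(q²)`.

With these relations `θF` and `θG` are explicit, for `G(q) = (P(-q) - P(q)) / 48`, which is `E_odd`.
Writing `φ = ∏ (1 - qⁿ)`, the function `G(q) φ(q²)⁴ / φ(q⁴)⁸` is fixed by `θ`, hence equals `q`.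
Therefore `h = F(q²) / G(q)`, and the theorem is the quotient rule for `θ` together with
`192 G(q)² = Q(q²) - F(q²)²`.
-/

section EulerOperator

variable {𝕜 : Type*} [NontriviallyNormedField 𝕜] {f g : 𝕜 → 𝕜} {a b q : 𝕜}

/-- `HasEulerDerivAt f a q` says that `f` is differentiable at `q` and that `a` is the value there
of `θ f`, where `θ = q d/dq` is the Euler operator. -/
def HasEulerDerivAt (f : 𝕜 → 𝕜) (a q : 𝕜) : Prop :=
  ∃ f', HasDerivAt f f' q ∧ q * f' = a

namespace HasEulerDerivAt

theorem differentiableAt (hf : HasEulerDerivAt f a q) : DifferentiableAt 𝕜 f q :=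
  hf.choose_spec.1.differentiableAt

theorem congr_deriv (hf : HasEulerDerivAt f a q) (hab : a = b) : HasEulerDerivAt f b q :=
  hab ▸ hf

theorem unique (ha : HasEulerDerivAt f a q) (hb : HasEulerDerivAt f b q) : a = b := by
  obtain ⟨f', hf', rfl⟩ := ha
  obtain ⟨f'', hf'', rfl⟩ := hb
  rw [hf'.unique hf'']

theorem congr_of_eqOn {s : Set 𝕜} (hf : HasEulerDerivAt f a q) (hs : IsOpen s) (hq : q ∈ s)
    (hgf : Set.EqOn g f s) : HasEulerDerivAt g a q := by
  obtain ⟨f', hf', rfl⟩ := hf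
  exact ⟨f', hf'.congr_of_eventuallyEq (hgf.eventuallyEq_of_mem (hs.mem_nhds hq)), rfl⟩

theorem eq_of_eqOn {s : Set 𝕜} (hf : HasEulerDerivAt f a q) (hg : HasEulerDerivAt g b q)
    (hs : IsOpen s) (hq : q ∈ s) (hfg : Set.EqOn f g s) : a = b :=
  hf.unique (hg.congr_of_eqOn hs hq hfg)

theorem add (hf : HasEulerDerivAt f a q) (hg : HasEulerDerivAt g b q) :
    HasEulerDerivAt (fun x ↦ f x + g x) (a + b) q := by
  obtain ⟨f', hf', rfl⟩ := hf
  obtain ⟨g', hg', rfl⟩ := hg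
  exact ⟨f' + g', hf'.add hg', mul_add ..⟩

theorem sub (hf : HasEulerDerivAt f a q) (hg : HasEulerDerivAt g b q) :
    HasEulerDerivAt (fun x ↦ f x - g x) (a - b) q := by
  obtain ⟨f', hf', rfl⟩ := hf
  obtain ⟨g', hg', rfl⟩ := hg
  exact ⟨f' - g', hf'.sub hg', mul_sub ..⟩

theorem const_mul (c : 𝕜) (hf : HasEulerDerivAt f a q) :
    HasEulerDerivAt (fun x ↦ c * f x) (c * a) q := by
  obtain ⟨f', hf', rfl⟩ := hf
  exact ⟨c * f', hf'.const_mul c, mul_left_comm ..⟩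

theorem mul (hf : HasEulerDerivAt f a q) (hg : HasEulerDerivAt g b q) :
    HasEulerDerivAt (fun x ↦ f x * g x) (a * g q + f q * b) q := by
  obtain ⟨f', hf', rfl⟩ := hf
  obtain ⟨g', hg', rfl⟩ := hg
  exact ⟨f' * g q + f q * g', hf'.mul hg', by ring⟩

theorem div (hf : HasEulerDerivAt f a q) (hg : HasEulerDerivAt g b q) (hgq : g q ≠ 0) :
    HasEulerDerivAt (fun x ↦ f x / g x) ((a * g q - f q * b) / g q ^ 2) q := by
  obtain ⟨f', hf', rfl⟩ := hf
  obtain ⟨g', hg', rfl⟩ := hg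
  exact ⟨(f' * g q - f q * g') / g q ^ 2, hf'.div hg' hgq, by ring⟩

theorem pow (n : ℕ) (hf : HasEulerDerivAt f a q) :
    HasEulerDerivAt (fun x ↦ f x ^ n) (n * f q ^ (n - 1) * a) q := by
  obtain ⟨f', hf', rfl⟩ := hf
  exact ⟨n * f q ^ (n - 1) * f', hf'.fun_pow n, by ring⟩

theorem comp_pow (n : ℕ) (hf : HasEulerDerivAt f a (q ^ n)) :
    HasEulerDerivAt (fun x ↦ f (x ^ n)) (n * a) q := by
  obtain ⟨f', hf', rfl⟩ := hf
  refine ⟨f' * (n * q ^ (n - 1)), hf'.comp q (hasDerivAt_pow n q), ?_⟩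
  rcases n with _ | n
  · simp
  · rw [Nat.add_sub_cancel, pow_succ]
    ring

theorem comp_neg (hf : HasEulerDerivAt f a (-q)) : HasEulerDerivAt (fun x ↦ f (-x)) a q := by
  obtain ⟨f', hf', rfl⟩ := hf
  exact ⟨-f', by simpa using! hf'.comp q (hasDerivAt_neg q), by ring⟩

end HasEulerDerivAt

end EulerOperator

section PowerSeries

open Metric FormalMultilinearSeries

theorem norm_pow_lt_one {α : Type*} [NormedDivisionRing α] {q : α} (hq : ‖q‖ < 1) {n : ℕ}
    (hn : n ≠ 0) : ‖q ^ n‖ < 1 := by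
  rw [norm_pow]
  exact pow_lt_one₀ (norm_nonneg q) hq hn

theorem eqOn_zero_of_mul_eq_zero_of_ne_zero {U : Set ℂ} {f g : ℂ → ℂ} {c : ℂ} (hU : IsOpen U)
    (hU' : IsPreconnected U) (hf : DifferentiableOn ℂ f U) (hg : DifferentiableOn ℂ g U)
    (hfg : ∀ z ∈ U, f z * g z = 0) (hc : c ∈ U) (hgc : g c ≠ 0) : ∀ z ∈ U, f z = 0 :=
  ((hf.analyticOnNhd hU).eq_zero_or_eq_zero_of_mul_eq_zero (hg.analyticOnNhd hU) hfg
    hU').resolve_right fun h ↦ hgc (h c hc)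

theorem eq_deriv_zero_mul_of_hasEulerDerivAt_self {f : ℂ → ℂ} {r : ℝ}
    (hf : ∀ q ∈ ball (0 : ℂ) r, HasEulerDerivAt f (f q) q) :
    ∀ q ∈ ball (0 : ℂ) r, f q = deriv f 0 * q := by
  intro q hq
  have hr : 0 < r := pos_of_mem_ball hq
  have hU : IsPreconnected (ball (0 : ℂ) r) := (convex_ball 0 r).isPreconnected
  have hfd : DifferentiableOn ℂ f (ball 0 r) := fun z hz ↦
    (hf z hz).differentiableAt.differentiableWithinAt
  have hf' : DifferentiableOn ℂ (deriv f) (ball 0 r) := hfd.deriv isOpen_ball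
  have hself (z) (hz : z ∈ ball (0 : ℂ) r) : z * deriv f z = f z := by
    obtain ⟨f', hf', h⟩ := hf z hz
    rwa [hf'.deriv]
  have hderiv₂ (z) (hz : z ∈ ball (0 : ℂ) r) : deriv (deriv f) z * z = 0 := by
    have hnhds : ball (0 : ℂ) r ∈ nhds z := isOpen_ball.mem_nhds hz
    have h : HasDerivAt f (1 * deriv f z + z * deriv (deriv f) z) z :=
      ((hasDerivAt_id z).mul (hf'.differentiableAt hnhds).hasDerivAt).congr_of_eventuallyEq
        (by filter_upwards [hnhds] with w hw using (hself w hw).symm)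
    linear_combination h.unique (hfd.differentiableAt hnhds).hasDerivAt
  have hderiv₂_zero : ∀ z ∈ ball (0 : ℂ) r, deriv (deriv f) z = 0 :=
    eqOn_zero_of_mul_eq_zero_of_ne_zero (g := id) (c := ((r / 2 : ℝ) : ℂ)) isOpen_ball hU
      (hf'.deriv isOpen_ball) differentiableOn_id hderiv₂
      (by rw [mem_ball_zero_iff, norm_real, norm_of_nonneg (by positivity)]; linarith)
      (by simpa using hr.ne')
  rw [← hself q hq, isOpen_ball.is_const_of_deriv_eq_zero hU hf' hderiv₂_zero hq
    (mem_ball_self hr), mul_comm]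

theorem hasFPowerSeriesOnBall_tsum_mul_pow {a : ℕ → ℂ}
    (ha : ∀ q : ℂ, ‖q‖ < 1 → Summable fun n ↦ a n * q ^ n) :
    HasFPowerSeriesOnBall (fun q ↦ ∑' n, a n * q ^ n) (ofScalars ℂ a) 0 1 where
  r_le := by
    refine ENNReal.le_of_forall_nnreal_lt fun r hr ↦ le_radius_of_summable _ ?_
    have hr' : ‖(r : ℂ)‖ < 1 := by simpa using hr
    simpa [ofScalars_norm] using (ha r hr').norm
  r_pos := zero_lt_one
  hasSum {q} hq := by
    have hq' : ‖q‖ < 1 := by simpa [← ofReal_norm] using hq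
    simpa [ofScalars_apply_eq, mul_comm] using (ha q hq').hasSum

variable {a : ℕ → ℂ} {q : ℂ}

theorem tsum_mul_pow_eq_even_add_odd (ha : Summable fun n ↦ a n * q ^ n) :
    ∑' n, a n * q ^ n =
      ∑' n, a (2 * n) * (q ^ 2) ^ n + ∑' n, a (2 * n + 1) * q ^ (2 * n + 1) := by
  simp only [← pow_mul]
  exact (tsum_even_add_odd (f := fun n ↦ a n * q ^ n)
    (ha.comp_injective (mul_right_injective₀ two_ne_zero))
    (ha.comp_injective fun m n h ↦ by simpa using h)).symm

theorem summable_mul_neg_pow (ha : Summable fun n ↦ a n * q ^ n) :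
    Summable fun n ↦ a n * (-q) ^ n :=
  .of_norm (by simpa using ha.norm)

theorem tsum_mul_neg_pow_eq_even_sub_odd (ha : Summable fun n ↦ a n * q ^ n) :
    ∑' n, a n * (-q) ^ n =
      ∑' n, a (2 * n) * (q ^ 2) ^ n - ∑' n, a (2 * n + 1) * q ^ (2 * n + 1) := by
  have hodd (n : ℕ) : (-q) ^ (2 * n + 1) = -q ^ (2 * n + 1) := Odd.neg_pow ⟨n, rfl⟩ q
  rw [tsum_mul_pow_eq_even_add_odd (summable_mul_neg_pow ha)]
  simp only [hodd, neg_sq, mul_neg, tsum_neg, sub_eq_add_neg]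

end PowerSeries

section DivisorSums

open ArithmeticFunction

variable {k : ℕ} {q : ℂ}

/-- The sum `∑ dᵏ` over the odd divisors `d` of `n`; the case `k = 1` is `sigmaOdd`. -/
def sigmaOddPow (k n : ℕ) : ℕ := ∑ d ∈ n.divisors with Odd d, d ^ k

theorem sigmaOddPow_one (n : ℕ) : sigmaOddPow 1 n = sigmaOdd n := by
  simp only [sigmaOddPow, sigmaOdd, pow_one]

theorem sigmaOddPow_le_sigma (k n : ℕ) : sigmaOddPow k n ≤ sigma k n := by
  rw [sigma_apply]
  exact Finset.sum_le_sum_of_subset (Finset.filter_subset _ _)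

theorem sigmaOddPow_two_mul (k n : ℕ) : sigmaOddPow k (2 * n) = sigmaOddPow k n := by
  rcases eq_or_ne n 0 with rfl | hn
  · rfl
  refine Finset.sum_congr (Finset.ext fun d ↦ ?_) fun _ _ ↦ rfl
  simp only [Finset.mem_filter, Nat.mem_divisors]
  constructor
  · rintro ⟨⟨hd, -⟩, hodd⟩
    exact ⟨⟨hodd.coprime_two_right.dvd_of_dvd_mul_left hd, hn⟩, hodd⟩
  · rintro ⟨⟨hd, -⟩, hodd⟩
    exact ⟨⟨hd.mul_left 2, by positivity⟩, hodd⟩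

theorem sigma_two_mul (k n : ℕ) : sigma k (2 * n) = sigmaOddPow k (2 * n) + 2 ^ k * sigma k n := by
  rcases eq_or_ne n 0 with rfl | hn
  · simp [sigmaOddPow]
  have heven : (2 * n).divisors.filter (¬Odd ·) = n.divisors.image (2 * ·) := by
    ext d
    simp only [Finset.mem_filter, Nat.mem_divisors, Finset.mem_image, Nat.not_odd_iff_even]
    constructor
    · rintro ⟨⟨hd, -⟩, heven⟩
      obtain ⟨c, rfl⟩ := heven.two_dvd
      exact ⟨c, ⟨Nat.dvd_of_mul_dvd_mul_left two_pos hd, hn⟩, rfl⟩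
    · rintro ⟨c, ⟨hc, -⟩, rfl⟩
      exact ⟨⟨Nat.mul_dvd_mul_left 2 hc, by positivity⟩, even_two_mul c⟩
  rw [sigma_apply, sigma_apply, sigmaOddPow, ← Finset.sum_filter_add_sum_filter_not _ (Odd ·),
    heven, Finset.sum_image fun _ _ _ _ h ↦ mul_right_injective₀ two_ne_zero h, Finset.mul_sum]
  simp only [mul_pow]

theorem sigma_two_mul_add_one (k n : ℕ) : sigma k (2 * n + 1) = sigmaOddPow k (2 * n + 1) := by
  rw [sigma_apply, sigmaOddPow, Finset.filter_true_of_mem]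
  intro d hd
  exact Odd.of_dvd_nat ⟨n, rfl⟩ (Nat.dvd_of_mem_divisors hd)

/-- The generating function `∑ σₖ(n) qⁿ`. -/
def sigmaSeries (k : ℕ) (q : ℂ) : ℂ := ∑' n, (sigma k n : ℂ) * q ^ n

/-- The generating function `∑ (∑_{d ∣ n, d odd} dᵏ) qⁿ`. -/
def sigmaOddPowSeries (k : ℕ) (q : ℂ) : ℂ := ∑' n, (sigmaOddPow k n : ℂ) * q ^ n

theorem summable_sigma_mul_pow (k : ℕ) (hq : ‖q‖ < 1) :
    Summable fun n ↦ (sigma k n : ℂ) * q ^ n := by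
  refine .of_norm_bounded (summable_norm_pow_mul_geometric_of_norm_lt_one (k + 1) hq) fun n ↦ ?_
  simp only [norm_mul, norm_pow, Complex.norm_natCast]
  gcongr
  exact_mod_cast sigma_le_pow_succ k n

theorem summable_sigmaOddPow_mul_pow (k : ℕ) (hq : ‖q‖ < 1) :
    Summable fun n ↦ (sigmaOddPow k n : ℂ) * q ^ n := by
  refine .of_norm_bounded (summable_sigma_mul_pow k hq).norm fun n ↦ ?_
  simp only [norm_mul, norm_pow, Complex.norm_natCast]
  gcongr
  exact_mod_cast sigmaOddPow_le_sigma k n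

theorem hasFPowerSeriesOnBall_sigmaSeries (k : ℕ) :
    HasFPowerSeriesOnBall (sigmaSeries k)
      (FormalMultilinearSeries.ofScalars ℂ fun n ↦ (sigma k n : ℂ)) 0 1 :=
  hasFPowerSeriesOnBall_tsum_mul_pow fun _ ↦ summable_sigma_mul_pow k

theorem differentiableAt_sigmaSeries (k : ℕ) (hq : ‖q‖ < 1) :
    DifferentiableAt ℂ (sigmaSeries k) q :=
  ((hasFPowerSeriesOnBall_sigmaSeries k).analyticAt_of_mem
    (by simpa [← ofReal_norm] using hq)).differentiableAt

theorem sigmaSeries_zero (k : ℕ) : sigmaSeries k 0 = 0 := by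
  simpa using ((hasFPowerSeriesOnBall_sigmaSeries k).coeff_zero 0).symm

theorem hasDerivAt_sigmaSeries_zero (k : ℕ) : HasDerivAt (sigmaSeries k) 1 0 := by
  simpa [FormalMultilinearSeries.ofScalars_apply_eq] using
    (hasFPowerSeriesOnBall_sigmaSeries k).hasFPowerSeriesAt.hasDerivAt

theorem sigmaSeries_eq_sigmaOddPowSeries_add (k : ℕ) (hq : ‖q‖ < 1) :
    sigmaSeries k q = sigmaOddPowSeries k q + 2 ^ k * sigmaSeries k (q ^ 2) := by
  have hq2 := norm_pow_lt_one hq two_ne_zero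
  have heven : ∑' n, (sigma k (2 * n) : ℂ) * (q ^ 2) ^ n =
      ∑' n, (sigmaOddPow k (2 * n) : ℂ) * (q ^ 2) ^ n + 2 ^ k * sigmaSeries k (q ^ 2) := by
    simp only [sigma_two_mul, sigmaOddPow_two_mul, sigmaSeries, ← tsum_mul_left]
    rw [← (summable_sigmaOddPow_mul_pow k hq2).tsum_add
      ((summable_sigma_mul_pow k hq2).mul_left _)]
    exact tsum_congr fun n ↦ by push_cast; ring
  rw [sigmaSeries, sigmaOddPowSeries, tsum_mul_pow_eq_even_add_odd (summable_sigma_mul_pow k hq),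
    tsum_mul_pow_eq_even_add_odd (summable_sigmaOddPow_mul_pow k hq), heven]
  simp only [sigma_two_mul_add_one]
  ring

theorem sigmaOddPowSeries_add_neg (k : ℕ) (hq : ‖q‖ < 1) :
    sigmaOddPowSeries k q + sigmaOddPowSeries k (-q) = 2 * sigmaOddPowSeries k (q ^ 2) := by
  have h := summable_sigmaOddPow_mul_pow k hq
  rw [sigmaOddPowSeries, sigmaOddPowSeries, tsum_mul_pow_eq_even_add_odd h,
    tsum_mul_neg_pow_eq_even_sub_odd h, sigmaOddPowSeries]
  simp only [sigmaOddPow_two_mul]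
  ring

theorem sigmaSeries_add_neg (k : ℕ) (hq : ‖q‖ < 1) :
    sigmaSeries k q + sigmaSeries k (-q) =
      (2 + 2 * 2 ^ k) * sigmaSeries k (q ^ 2) - 2 * 2 ^ k * sigmaSeries k (q ^ 4) := by
  have hq2 := norm_pow_lt_one hq two_ne_zero
  have h1 := sigmaSeries_eq_sigmaOddPowSeries_add k hq
  have h2 := sigmaSeries_eq_sigmaOddPowSeries_add k (q := -q) (by rwa [norm_neg])
  have h3 := sigmaSeries_eq_sigmaOddPowSeries_add k hq2
  rw [neg_sq] at h2
  rw [← pow_mul] at h3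
  linear_combination h1 + h2 - 2 * h3 + sigmaOddPowSeries_add_neg k hq

theorem sigmaSeries_sub_neg (k : ℕ) (hq : ‖q‖ < 1) :
    sigmaSeries k q - sigmaSeries k (-q) =
      2 * ∑' n, (sigma k (2 * n + 1) : ℂ) * q ^ (2 * n + 1) := by
  have h := summable_sigma_mul_pow k hq
  rw [sigmaSeries, sigmaSeries, tsum_mul_pow_eq_even_add_odd h, tsum_mul_neg_pow_eq_even_sub_odd h]
  ring

end DivisorSums

section Nome

open Function.Periodic
open UpperHalfPlane hiding I

theorem nome_eq_qParam (τ : ℂ) : nome τ = qParam 1 τ := by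
  simp [nome, qParam]

theorem nome_ne_zero (τ : ℂ) : nome τ ≠ 0 :=
  Complex.exp_ne_zero _

theorem nome_natCast_mul (n : ℕ) (τ : ℂ) : nome (n * τ) = nome τ ^ n := by
  rw [nome, nome, ← Complex.exp_nat_mul]
  ring_nf

theorem norm_nome_lt_one {τ : ℂ} (hτ : 0 < τ.im) : ‖nome τ‖ < 1 :=
  nome_eq_qParam τ ▸ norm_qParam_lt_one one_pos hτ

theorem tendsto_nome_atImInfty : Filter.Tendsto (fun z : ℍ ↦ nome z) atImInfty (nhds 0) := by
  simpa only [nome_eq_qParam] using qParam_tendsto_atImInfty zero_lt_one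

theorem exists_nome_eq {q : ℂ} (hq : ‖q‖ < 1) (hq0 : q ≠ 0) : ∃ z : ℍ, nome z = q :=
  ⟨⟨invQParam 1 q, im_invQParam_pos_of_norm_lt_one zero_lt_one hq hq0⟩,
    (nome_eq_qParam _).trans (qParam_right_inv one_ne_zero hq0)⟩

theorem hasDerivAt_nome (τ : ℂ) : HasDerivAt nome (2 * π * I * nome τ) τ := by
  have h : HasDerivAt nome (nome τ * (2 * π * I * 1)) τ :=
    ((hasDerivAt_id τ).const_mul (2 * π * I)).cexp
  rwa [mul_one, mul_comm] at h

theorem HasEulerDerivAt.hasDerivAt_comp_nome {f : ℂ → ℂ} {a τ : ℂ}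
    (hf : HasEulerDerivAt f a (nome τ)) :
    HasDerivAt (fun z ↦ f (nome z)) (2 * π * I * a) τ := by
  obtain ⟨f', hf', rfl⟩ := hf
  convert! hf'.comp τ (hasDerivAt_nome τ) using 1
  ring

end Nome

section LevelOne

open UpperHalfPlane hiding I
open Derivative EisensteinSeries ModularForm Metric
open scoped Manifold MatrixGroups Topology

theorem eq_zero_of_isZeroAtImInfty {k : ℤ} (hk : k < 12) {F : ℍ → ℂ} (hF : MDiff F)
    (hslash : ∀ γ : SL(2, ℤ), F ∣[k] γ = F) (hzero : IsZeroAtImInfty F) : F = 0 := by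
  let F' : CuspForm 𝒮ℒ k :=
    { toFun := F
      slash_action_eq' := by
        rintro _ ⟨γ, rfl⟩
        exact hslash γ
      holo' := hF
      zero_at_cusps' := fun hc ↦ by
        rw [Subgroup.IsArithmetic.isCusp_iff_isCusp_SL2Z] at hc
        rw [OnePoint.isZeroAt_iff_forall_SL2Z hc]
        intro γ _
        rwa [hslash γ] }
  exact congrArg DFunLike.coe
    (rank_zero_iff_forall_zero.mp (CuspForm.rank_eq_zero_of_weight_lt_twelve hk) F')

theorem comp_nome_comp_ofComplex_eventuallyEq (f : ℂ → ℂ) {τ : ℂ} (hτ : 0 < τ.im) :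
    ((fun z : ℍ ↦ f (nome z)) ∘ ofComplex) =ᶠ[𝓝 τ] fun w ↦ f (nome w) := by
  filter_upwards [isOpen_upperHalfPlaneSet.mem_nhds hτ] with w hw
  rw [Function.comp_apply, ofComplex_apply_of_im_pos hw]

theorem mdifferentiable_comp_nome {f : ℂ → ℂ} (hf : DifferentiableOn ℂ f (ball 0 1)) :
    MDiff fun z : ℍ ↦ f (nome z) := by
  rw [UpperHalfPlane.mdifferentiable_iff]
  intro τ hτ
  have hnome : nome τ ∈ ball 0 1 := mem_ball_zero_iff.mpr (norm_nome_lt_one hτ)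
  have h := (hf.differentiableAt (isOpen_ball.mem_nhds hnome)).comp τ
    (hasDerivAt_nome τ).differentiableAt
  exact (h.congr_of_eventuallyEq
    (comp_nome_comp_ofComplex_eventuallyEq f hτ)).differentiableWithinAt

theorem eqOn_zero_of_slash_invariant {k : ℤ} (hk : k < 12) {f : ℂ → ℂ}
    (hf : DifferentiableOn ℂ f (ball 0 1)) (hf0 : f 0 = 0)
    (hslash : ∀ γ : SL(2, ℤ), (fun z : ℍ ↦ f (nome z)) ∣[k] γ = fun z : ℍ ↦ f (nome z)) :
    ∀ q ∈ ball 0 1, f q = 0 := by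
  intro q hq
  rcases eq_or_ne q 0 with rfl | hq0
  · exact hf0
  obtain ⟨z, rfl⟩ := exists_nome_eq (mem_ball_zero_iff.mp hq) hq0
  have hcont : ContinuousAt f 0 :=
    (hf.differentiableAt (isOpen_ball.mem_nhds (mem_ball_self one_pos))).continuousAt
  have hzero : IsZeroAtImInfty fun z : ℍ ↦ f (nome z) :=
    (hf0 ▸ hcont.tendsto).comp tendsto_nome_atImInfty
  exact congrFun
    (eq_zero_of_isZeroAtImInfty hk (mdifferentiable_comp_nome hf) hslash hzero) z

theorem normalizedDerivOfComplex_comp_nome {f : ℂ → ℂ} {a : ℂ} {z : ℍ}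
    (hf : HasEulerDerivAt f a (nome z)) : D (fun z : ℍ ↦ f (nome z)) z = a := by
  rw [normalizedDerivOfComplex,
    (comp_nome_comp_ofComplex_eventuallyEq f z.im_pos).deriv_eq,
    hf.hasDerivAt_comp_nome.deriv, inv_mul_cancel_left₀ two_pi_I_ne_zero]

theorem hasEulerDerivAt_of_slash_invariant {k : ℤ} (hk : k < 12) {f g : ℂ → ℂ}
    (hf : DifferentiableOn ℂ f (ball 0 1)) (hg : DifferentiableOn ℂ g (ball 0 1)) (hg0 : g 0 = 0)
    (hslash : ∀ γ : SL(2, ℤ), (D (fun z : ℍ ↦ f (nome z)) - fun z : ℍ ↦ g (nome z)) ∣[k] γ =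
      D (fun z : ℍ ↦ f (nome z)) - fun z : ℍ ↦ g (nome z)) {q : ℂ} (hq : ‖q‖ < 1) :
    HasEulerDerivAt f (g q) q := by
  have hθ (w : ℂ) (hw : ‖w‖ < 1) : HasEulerDerivAt f (w * deriv f w) w :=
    ⟨_, (hf.differentiableAt (isOpen_ball.mem_nhds (by simpa using hw))).hasDerivAt, rfl⟩
  have hD : (D (fun z : ℍ ↦ f (nome z)) - fun z : ℍ ↦ g (nome z)) =
      fun z : ℍ ↦ nome z * deriv f (nome z) - g (nome z) := by
    funext z
    rw [Pi.sub_apply,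
      normalizedDerivOfComplex_comp_nome (hθ _ (norm_nome_lt_one z.im_pos))]
  rw [hD] at hslash
  refine (hθ q hq).congr_deriv (sub_eq_zero.mp ?_)
  exact eqOn_zero_of_slash_invariant hk (f := fun w ↦ w * deriv f w - g w)
    ((differentiableOn_id.mul (hf.deriv isOpen_ball)).sub hg) (by simp [hg0]) hslash q
    (by simpa using hq)

theorem hasDerivAt_D2_comp_ofComplex (γ : SL(2, ℤ)) (z : ℍ) :
    HasDerivAt (D2 γ ∘ ofComplex) (-(2 * π * I)⁻¹ * D2 γ z ^ 2) z := by
  have hdenom : HasDerivAt (fun w : ℂ ↦ (γ 1 0 : ℂ) * w + γ 1 1) (γ 1 0) z := by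
    simpa using ((hasDerivAt_id (z : ℂ)).const_mul (γ 1 0 : ℂ)).add_const (γ 1 1 : ℂ)
  have happly (w : ℍ) : D2 γ w = 2 * π * I * γ 1 0 / ((γ 1 0 : ℂ) * w + γ 1 1) := by
    rw [D2, ModularGroup.denom_apply]
  have heq : (D2 γ ∘ ofComplex) =ᶠ[𝓝 (z : ℂ)]
      fun w ↦ 2 * π * I * γ 1 0 / ((γ 1 0 : ℂ) * w + γ 1 1) := by
    filter_upwards [isOpen_upperHalfPlaneSet.mem_nhds z.im_pos] with w hw
    rw [Function.comp_apply, ofComplex_apply_of_im_pos hw, happly]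
  have hne : (γ 1 0 : ℂ) * z + γ 1 1 ≠ 0 := ModularGroup.denom_apply γ z ▸ denom_ne_zero γ z
  refine (((hasDerivAt_const _ (2 * π * I * γ 1 0 : ℂ)).fun_div hdenom hne
    ).congr_of_eventuallyEq heq).congr_deriv ?_
  rw [happly]
  field_simp
  ring

theorem mdifferentiable_D2 (γ : SL(2, ℤ)) : MDiff (D2 γ) :=
  UpperHalfPlane.mdifferentiable_iff.mpr fun z hz ↦
    (hasDerivAt_D2_comp_ofComplex γ ⟨z, hz⟩).differentiableAt.differentiableWithinAt

theorem normalizedDerivOfComplex_D2 (γ : SL(2, ℤ)) :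
    D (D2 γ) = (4 * (π : ℂ) ^ 2)⁻¹ • D2 γ ^ 2 := by
  funext z
  rw [normalizedDerivOfComplex, (hasDerivAt_D2_comp_ofComplex γ z).deriv, Pi.smul_apply,
    Pi.pow_apply, smul_eq_mul]
  grind [I_sq]

theorem E2_slash (γ : SL(2, ℤ)) :
    E2 ∣[(2 : ℤ)] γ = E2 - (12 * (4 * (π : ℂ) ^ 2)⁻¹) • D2 γ := by
  rw [E2_slash_action, riemannZeta_two]
  congr 2
  ring

theorem normalizedDerivOfComplex_E2_slash (γ : SL(2, ℤ)) (z : ℍ) :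
    (D E2 ∣[(4 : ℤ)] γ) z = D E2 z - 2 * ((4 * (π : ℂ) ^ 2)⁻¹ * D2 γ z) * E2 z +
      12 * ((4 * (π : ℂ) ^ 2)⁻¹ * D2 γ z) ^ 2 := by
  have h := congrFun (normalizedDerivOfComplex_SL_slash (k := 2) E2_mdifferentiable (γ := γ)) z
  rw [E2_slash, normalizedDerivOfComplex_sub _ _ E2_mdifferentiable
    ((mdifferentiable_D2 γ).const_smul _), normalizedDerivOfComplex_smul _ _ (mdifferentiable_D2 γ),
    normalizedDerivOfComplex_D2] at h
  have hD2 : (2 * π * I)⁻¹ * (γ 1 0 / denom γ z) = -((4 * (π : ℂ) ^ 2)⁻¹ * D2 γ z) := by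
    rw [D2]
    grind [I_sq]
  simp only [Pi.sub_apply, Pi.smul_apply, Pi.pow_apply, smul_eq_mul, Int.reduceAdd] at h
  push_cast at h
  linear_combination -h + 2 * (E2 z - 12 * (4 * (π : ℂ) ^ 2)⁻¹ * D2 γ z) * hD2

theorem normalizedDerivOfComplex_E2_sub_slash (γ : SL(2, ℤ)) :
    (D E2 - (12⁻¹ : ℂ) • (E2 * E2)) ∣[(4 : ℤ)] γ = D E2 - (12⁻¹ : ℂ) • (E2 * E2) := by
  have hE2_sq : (E2 * E2) ∣[(4 : ℤ)] γ = (E2 ∣[(2 : ℤ)] γ) * (E2 ∣[(2 : ℤ)] γ) :=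
    mul_slash_SL2 2 2 γ E2 E2
  rw [sub_eq_add_neg, SlashAction.add_slash, SlashAction.neg_slash, SL_smul_slash, hE2_sq,
    E2_slash]
  funext z
  simp only [Pi.add_apply, Pi.neg_apply, Pi.sub_apply, Pi.smul_apply, Pi.mul_apply, smul_eq_mul,
    normalizedDerivOfComplex_E2_slash]
  ring

end LevelOne

section Ramanujan

open UpperHalfPlane hiding I
open ArithmeticFunction Derivative EisensteinSeries ModularForm Metric

/-- Ramanujan's `P = 1 - 24 ∑ σ₁(n) qⁿ`, the `q`-expansion of `E₂`. -/
def ramanujanP (q : ℂ) : ℂ := 1 - 24 * sigmaSeries 1 q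

/-- Ramanujan's `Q = 1 + 240 ∑ σ₃(n) qⁿ`, the `q`-expansion of `E₄`. -/
def ramanujanQ (q : ℂ) : ℂ := 1 + 240 * sigmaSeries 3 q

/-- Ramanujan's `R = 1 - 504 ∑ σ₅(n) qⁿ`, the `q`-expansion of `E₆`. -/
def ramanujanR (q : ℂ) : ℂ := 1 - 504 * sigmaSeries 5 q

local notation "P" => ramanujanP
local notation "Q" => ramanujanQ
local notation "R" => ramanujanR

theorem ramanujanP_zero : P 0 = 1 := by
  simp [ramanujanP, sigmaSeries_zero]

theorem ramanujanQ_zero : Q 0 = 1 := by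
  simp [ramanujanQ, sigmaSeries_zero]

theorem ramanujanR_zero : R 0 = 1 := by
  simp [ramanujanR, sigmaSeries_zero]

theorem differentiableOn_ramanujanP : DifferentiableOn ℂ P (ball 0 1) := fun _ hq ↦
  (((differentiableAt_sigmaSeries 1 (mem_ball_zero_iff.mp hq)).const_mul 24).const_sub
    1).differentiableWithinAt

theorem differentiableOn_ramanujanQ : DifferentiableOn ℂ Q (ball 0 1) := fun _ hq ↦
  (((differentiableAt_sigmaSeries 3 (mem_ball_zero_iff.mp hq)).const_mul 240).const_add
    1).differentiableWithinAt

theorem differentiableOn_ramanujanR : DifferentiableOn ℂ R (ball 0 1) := fun _ hq ↦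
  (((differentiableAt_sigmaSeries 5 (mem_ball_zero_iff.mp hq)).const_mul 504).const_sub
    1).differentiableWithinAt

theorem tsum_pnat_sigma_mul_pow (k : ℕ) {q : ℂ} (hq : ‖q‖ < 1) :
    ∑' n : ℕ+, (sigma k n : ℂ) * q ^ (n : ℕ) = sigmaSeries k q := by
  rw [sigmaSeries, ← tsum_zero_pnat_eq_tsum_nat (summable_sigma_mul_pow k hq)]
  simp

theorem E2_eq_ramanujanP : E2 = fun z : ℍ ↦ P (nome z) := by
  funext z
  rw [E2_eq_tsum_cexp, ramanujanP, ← tsum_pnat_sigma_mul_pow 1 (norm_nome_lt_one z.im_pos)]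
  rfl

theorem E4_eq_ramanujanQ : ⇑E₄ = fun z : ℍ ↦ Q (nome z) := by
  funext z
  refine (q_expansion_bernoulli (k := 4) (by norm_num) ⟨2, rfl⟩ z).trans ?_
  rw [ramanujanQ, ← tsum_pnat_sigma_mul_pow 3 (norm_nome_lt_one z.im_pos),
    show bernoulli 4 = -1 / 30 by norm_num [bernoulli, bernoulli'_four]]
  norm_num [nome]

theorem E6_eq_ramanujanR : ⇑E₆ = fun z : ℍ ↦ R (nome z) := by
  funext z
  refine (q_expansion_bernoulli (k := 6) (by norm_num) ⟨3, rfl⟩ z).trans ?_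
  rw [ramanujanR, ← tsum_pnat_sigma_mul_pow 5 (norm_nome_lt_one z.im_pos),
    show bernoulli 6 = 1 / 42 by decide +kernel]
  norm_num [nome, sub_eq_add_neg]

variable {q : ℂ}

theorem hasEulerDerivAt_ramanujanP (hq : ‖q‖ < 1) :
    HasEulerDerivAt P ((P q ^ 2 - Q q) / 12) q := by
  refine hasEulerDerivAt_of_slash_invariant (k := 4)
    (g := fun q ↦ (P q ^ 2 - Q q) / 12) (by norm_num) differentiableOn_ramanujanP
    (((differentiableOn_ramanujanP.pow 2).sub differentiableOn_ramanujanQ).div_const 12)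
    (by simp [ramanujanP_zero, ramanujanQ_zero]) (fun γ ↦ ?_) hq
  have hE4 : ⇑E₄ ∣[(4 : ℤ)] γ = ⇑E₄ := E₄.slash_action_eq' _ ⟨γ, rfl⟩
  have h : (D (fun z : ℍ ↦ P (nome z)) - fun z : ℍ ↦ (P (nome z) ^ 2 - Q (nome z)) / 12) =
      D E2 - (12⁻¹ : ℂ) • (E2 * E2) + (12⁻¹ : ℂ) • ⇑E₄ := by
    rw [E2_eq_ramanujanP, E4_eq_ramanujanQ]
    funext z
    simp only [Pi.sub_apply, Pi.add_apply, Pi.smul_apply, Pi.mul_apply, smul_eq_mul]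
    ring
  rw [h, SlashAction.add_slash, normalizedDerivOfComplex_E2_sub_slash, SL_smul_slash, hE4]

theorem hasEulerDerivAt_ramanujanQ (hq : ‖q‖ < 1) :
    HasEulerDerivAt Q ((P q * Q q - R q) / 3) q := by
  refine hasEulerDerivAt_of_slash_invariant (k := 6)
    (g := fun q ↦ (P q * Q q - R q) / 3) (by norm_num) differentiableOn_ramanujanQ
    (((differentiableOn_ramanujanP.mul differentiableOn_ramanujanQ).sub
      differentiableOn_ramanujanR).div_const 3)
    (by simp [ramanujanP_zero, ramanujanQ_zero, ramanujanR_zero]) (fun γ ↦ ?_) hq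
  have hE4 : ⇑E₄ ∣[(4 : ℤ)] γ = ⇑E₄ := E₄.slash_action_eq' _ ⟨γ, rfl⟩
  have hE6 : ⇑E₆ ∣[(6 : ℤ)] γ = ⇑E₆ := E₆.slash_action_eq' _ ⟨γ, rfl⟩
  have h : (D (fun z : ℍ ↦ Q (nome z)) - fun z : ℍ ↦ (P (nome z) * Q (nome z) - R (nome z)) / 3) =
      serreDerivative (4 : ℤ) E₄ + (3⁻¹ : ℂ) • ⇑E₆ := by
    rw [E4_eq_ramanujanQ, E6_eq_ramanujanR]
    funext z
    simp only [Pi.sub_apply, Pi.add_apply, Pi.smul_apply, smul_eq_mul, serreDerivative_apply,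
      E2_eq_ramanujanP]
    push_cast
    ring
  rw [h, SlashAction.add_slash, SL_smul_slash, hE6]
  exact congrArg (· + _) (serreDerivative_slash_invariant E₄.holo' hE4)

theorem hasEulerDerivAt_ramanujanR (hq : ‖q‖ < 1) :
    HasEulerDerivAt R ((P q * R q - Q q ^ 2) / 2) q := by
  refine hasEulerDerivAt_of_slash_invariant (k := 8)
    (g := fun q ↦ (P q * R q - Q q ^ 2) / 2) (by norm_num) differentiableOn_ramanujanR
    (((differentiableOn_ramanujanP.mul differentiableOn_ramanujanR).sub
      (differentiableOn_ramanujanQ.pow 2)).div_const 2)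
    (by simp [ramanujanP_zero, ramanujanQ_zero, ramanujanR_zero]) (fun γ ↦ ?_) hq
  have hE4 : ⇑E₄ ∣[(4 : ℤ)] γ = ⇑E₄ := E₄.slash_action_eq' _ ⟨γ, rfl⟩
  have hE6 : ⇑E₆ ∣[(6 : ℤ)] γ = ⇑E₆ := E₆.slash_action_eq' _ ⟨γ, rfl⟩
  have hE4_sq : (⇑E₄ * ⇑E₄) ∣[(8 : ℤ)] γ = ⇑E₄ * ⇑E₄ := by
    rw [show (8 : ℤ) = 4 + 4 from rfl, mul_slash_SL2, hE4]
  have h : (D (fun z : ℍ ↦ R (nome z)) -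
      fun z : ℍ ↦ (P (nome z) * R (nome z) - Q (nome z) ^ 2) / 2) =
      serreDerivative (6 : ℤ) E₆ + (2⁻¹ : ℂ) • (⇑E₄ * ⇑E₄) := by
    rw [E4_eq_ramanujanQ, E6_eq_ramanujanR]
    funext z
    simp only [Pi.sub_apply, Pi.add_apply, Pi.smul_apply, Pi.mul_apply, smul_eq_mul,
      serreDerivative_apply, E2_eq_ramanujanP]
    push_cast
    ring
  rw [h, SlashAction.add_slash, SL_smul_slash, hE4_sq]
  exact congrArg (· + _) (serreDerivative_slash_invariant E₆.holo' hE6)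

theorem ramanujanP_add_neg (hq : ‖q‖ < 1) :
    P q + P (-q) = 6 * P (q ^ 2) - 4 * P (q ^ 4) := by
  simp only [ramanujanP]
  linear_combination -24 * sigmaSeries_add_neg 1 hq

theorem ramanujanQ_add_neg (hq : ‖q‖ < 1) :
    Q q + Q (-q) = 18 * Q (q ^ 2) - 16 * Q (q ^ 4) := by
  simp only [ramanujanQ]
  linear_combination 240 * sigmaSeries_add_neg 3 hq

theorem ramanujanR_add_neg (hq : ‖q‖ < 1) :
    R q + R (-q) = 66 * R (q ^ 2) - 64 * R (q ^ 4) := by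
  simp only [ramanujanR]
  linear_combination -504 * sigmaSeries_add_neg 5 hq

theorem ramanujanP_sq_add_neg (hq : ‖q‖ < 1) :
    P q ^ 2 + P (-q) ^ 2 = 12 * P (q ^ 2) ^ 2 - 16 * P (q ^ 4) ^ 2 + 6 * Q (q ^ 2) := by
  have hP {w : ℂ} := hasEulerDerivAt_ramanujanP (q := w)
  have hleft := (hP hq).add (hP (w := -q) (by rwa [norm_neg])).comp_neg
  have hright := (((hP (norm_pow_lt_one hq two_ne_zero)).comp_pow 2).const_mul 6).sub
    (((hP (norm_pow_lt_one hq four_ne_zero)).comp_pow 4).const_mul 4)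
  have h := hleft.eq_of_eqOn hright isOpen_ball (mem_ball_zero_iff.mpr hq) fun _ hw ↦
    ramanujanP_add_neg (mem_ball_zero_iff.mp hw)
  push_cast at h
  linear_combination 12 * h + ramanujanQ_add_neg hq

theorem ramanujanP_mul_ramanujanQ_add_neg (hq : ‖q‖ < 1) :
    P q * Q q + P (-q) * Q (-q) =
      36 * (P (q ^ 2) * Q (q ^ 2)) - 64 * (P (q ^ 4) * Q (q ^ 4)) + 30 * R (q ^ 2) := by
  have hQ {w : ℂ} := hasEulerDerivAt_ramanujanQ (q := w)
  have hleft := (hQ hq).add (hQ (w := -q) (by rwa [norm_neg])).comp_neg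
  have hright := (((hQ (norm_pow_lt_one hq two_ne_zero)).comp_pow 2).const_mul 18).sub
    (((hQ (norm_pow_lt_one hq four_ne_zero)).comp_pow 4).const_mul 16)
  have h := hleft.eq_of_eqOn hright isOpen_ball (mem_ball_zero_iff.mpr hq) fun _ hw ↦
    ramanujanQ_add_neg (mem_ball_zero_iff.mp hw)
  push_cast at h
  linear_combination 3 * h + ramanujanR_add_neg hq

theorem ramanujanP_cube_add_neg (hq : ‖q‖ < 1) :
    P q ^ 3 + P (-q) ^ 3 = 24 * P (q ^ 2) ^ 3 - 64 * P (q ^ 4) ^ 3 +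
      36 * (P (q ^ 2) * Q (q ^ 2)) + 6 * R (q ^ 2) := by
  have hP {w : ℂ} := hasEulerDerivAt_ramanujanP (q := w)
  have hq2 := norm_pow_lt_one hq two_ne_zero
  have hleft := ((hP hq).pow 2).add ((hP (w := -q) (by rwa [norm_neg])).pow 2).comp_neg
  have hright := (((((hP hq2).pow 2).comp_pow 2).const_mul 12).sub
    ((((hP (norm_pow_lt_one hq four_ne_zero)).pow 2).comp_pow 4).const_mul 16)).add
    (((hasEulerDerivAt_ramanujanQ hq2).comp_pow 2).const_mul 6)
  have h := hleft.eq_of_eqOn hright isOpen_ball (mem_ball_zero_iff.mpr hq) fun _ hw ↦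
    ramanujanP_sq_add_neg (mem_ball_zero_iff.mp hw)
  push_cast at h
  linear_combination 6 * h + ramanujanP_mul_ramanujanQ_add_neg hq

/-- The weight two Eisenstein series of level `2`, `2 P(q²) - P(q) = 1 + 24 ∑ σ_odd(n) qⁿ`; it is
`Estar` as a function of `q`. -/
def eisensteinTwo (q : ℂ) : ℂ := 2 * P (q ^ 2) - P q

/-- The odd part `∑ σ₁(2n+1) q²ⁿ⁺¹` of `∑ σ₁(n) qⁿ`; it is `Eodd` as a function of `q`. -/
def sigmaOddPart (q : ℂ) : ℂ := ∑' n, (sigma 1 (2 * n + 1) : ℂ) * q ^ (2 * n + 1)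

local notation "F" => eisensteinTwo
local notation "G" => sigmaOddPart

theorem eisensteinTwo_eq_one_add (hq : ‖q‖ < 1) : F q = 1 + 24 * sigmaOddPowSeries 1 q := by
  simp only [eisensteinTwo, ramanujanP]
  linear_combination 24 * sigmaSeries_eq_sigmaOddPowSeries_add 1 hq

theorem ramanujanP_sub_neg (hq : ‖q‖ < 1) : P q - P (-q) = -48 * G q := by
  simp only [ramanujanP, sigmaOddPart]
  linear_combination -24 * sigmaSeries_sub_neg 1 hq

theorem sigmaOddPart_sq (hq : ‖q‖ < 1) : 192 * G q ^ 2 = Q (q ^ 2) - F (q ^ 2) ^ 2 := by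
  rw [eisensteinTwo, ← pow_mul]
  linear_combination (1 / 6 : ℂ) * ramanujanP_sq_add_neg hq -
    (1 / 12 : ℂ) * (P q + P (-q) + (6 * P (q ^ 2) - 4 * P (q ^ 4))) * ramanujanP_add_neg hq -
    (1 / 12 : ℂ) * (P q - P (-q) - 48 * G q) * ramanujanP_sub_neg hq

theorem ramanujanR_eq (hq : ‖q‖ < 1) : R q = 4 * F q ^ 3 - 3 * (F q * Q q) := by
  obtain ⟨w, rfl⟩ : ∃ w, q = w ^ 2 := ⟨_, (cpow_nat_inv_pow q two_ne_zero).symm⟩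
  have hw : ‖w‖ < 1 := by rwa [norm_pow, pow_lt_one_iff_of_nonneg (norm_nonneg w) two_ne_zero] at hq
  rw [eisensteinTwo, ← pow_mul]
  -- The power sums of `P w`, `P (-w)` satisfy Newton's identity `2 p₃ = p₁ (3 p₂ - p₁²)`.
  have hnewton : 2 * (P w ^ 3 + P (-w) ^ 3) = (P w + P (-w)) *
      (3 * (P w ^ 2 + P (-w) ^ 2) - (P w + P (-w)) ^ 2) := by ring
  rw [ramanujanP_cube_add_neg hw, ramanujanP_add_neg hw, ramanujanP_sq_add_neg hw] at hnewton
  linear_combination (1 / 12 : ℂ) * hnewton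

theorem eisensteinTwo_zero : F 0 = 1 := by
  norm_num [eisensteinTwo, ramanujanP_zero]

theorem hasEulerDerivAt_eisensteinTwo' (hq : ‖q‖ < 1) :
    HasEulerDerivAt F ((F q ^ 2 + 2 * (F q * P q) + Q q - 4 * Q (q ^ 2)) / 12) q := by
  refine ((((hasEulerDerivAt_ramanujanP (norm_pow_lt_one hq two_ne_zero)).comp_pow 2).const_mul
    2).sub (hasEulerDerivAt_ramanujanP hq)).congr_deriv ?_
  rw [eisensteinTwo]
  push_cast
  ring

theorem differentiableOn_eisensteinTwo : DifferentiableOn ℂ F (ball 0 1) := fun _ hq ↦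
  (hasEulerDerivAt_eisensteinTwo' (mem_ball_zero_iff.mp hq)).differentiableAt.differentiableWithinAt

theorem ramanujanQ_relation_mul (hq : ‖q‖ < 1) :
    (5 * F q ^ 2 - Q q - 4 * Q (q ^ 2)) * (4 * F q ^ 2 - Q q) = 0 := by
  have hF := hasEulerDerivAt_eisensteinTwo' hq
  have h := (hasEulerDerivAt_ramanujanR hq).eq_of_eqOn
    (((hF.pow 3).const_mul 4).sub ((hF.mul (hasEulerDerivAt_ramanujanQ hq)).const_mul 3))
    isOpen_ball (mem_ball_zero_iff.mpr hq) fun _ hw ↦ ramanujanR_eq (mem_ball_zero_iff.mp hw)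
  push_cast at h
  rw [ramanujanR_eq hq] at h
  linear_combination -4 * h

theorem eisensteinTwo_sq (hq : ‖q‖ < 1) : 5 * F q ^ 2 = Q q + 4 * Q (q ^ 2) := by
  have hQ2 : DifferentiableOn ℂ (fun w ↦ Q (w ^ 2)) (ball 0 1) :=
    differentiableOn_ramanujanQ.comp (differentiableOn_pow 2) fun w hw ↦
      mem_ball_zero_iff.mpr (norm_pow_lt_one (mem_ball_zero_iff.mp hw) two_ne_zero)
  have hF2 := differentiableOn_eisensteinTwo.pow 2
  have h : 5 * F q ^ 2 - Q q - 4 * Q (q ^ 2) = 0 := eqOn_zero_of_mul_eq_zero_of_ne_zero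
    (c := 0) isOpen_ball (convex_ball (0 : ℂ) 1).isPreconnected
    (((hF2.const_mul 5).sub differentiableOn_ramanujanQ).sub (hQ2.const_mul 4))
    ((hF2.const_mul 4).sub differentiableOn_ramanujanQ)
    (fun w hw ↦ ramanujanQ_relation_mul (mem_ball_zero_iff.mp hw)) (mem_ball_self one_pos)
    (by norm_num [eisensteinTwo_zero, ramanujanQ_zero]) q (mem_ball_zero_iff.mpr hq)
  linear_combination h

theorem hasEulerDerivAt_eisensteinTwo (hq : ‖q‖ < 1) :
    HasEulerDerivAt F ((F q * P q - 2 * F q ^ 2 + Q q) / 6) q :=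
  (hasEulerDerivAt_eisensteinTwo' hq).congr_deriv
    (by linear_combination (1 / 12 : ℂ) * eisensteinTwo_sq hq)

theorem ramanujanQ_sub_neg (hq : ‖q‖ < 1) : Q q - Q (-q) = 480 * (G q * F (q ^ 2)) := by
  have h := eisensteinTwo_sq hq
  have hneg := eisensteinTwo_sq (q := -q) (by rwa [norm_neg])
  have hPsub := ramanujanP_sub_neg hq
  have hPadd := ramanujanP_add_neg hq
  simp only [eisensteinTwo, neg_sq, ← pow_mul] at h hneg ⊢
  linear_combination hneg - h + 5 * (P q + P (-q) - 4 * P (q ^ 2)) * hPsub -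
    240 * G q * hPadd

theorem hasEulerDerivAt_sigmaOddPart (hq : ‖q‖ < 1) :
    HasEulerDerivAt G (G q * (P (q ^ 2) + 2 * F (q ^ 2)) / 3) q := by
  have hG := ((hasEulerDerivAt_ramanujanP hq).sub (hasEulerDerivAt_ramanujanP (q := -q)
    (by rwa [norm_neg])).comp_neg).const_mul (-1 / 48)
  refine (hG.congr_of_eqOn isOpen_ball (mem_ball_zero_iff.mpr hq) fun w hw ↦ ?_).congr_deriv ?_
  · linear_combination (1 / 48 : ℂ) * ramanujanP_sub_neg (mem_ball_zero_iff.mp hw)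
  · have hPadd := ramanujanP_add_neg hq
    have hQsub := ramanujanQ_sub_neg hq
    simp only [eisensteinTwo, ← pow_mul] at hQsub ⊢
    linear_combination (1 / 576 : ℂ) * hQsub - (1 / 576 : ℂ) * (P q + P (-q)) *
      ramanujanP_sub_neg hq + (1 / 12 : ℂ) * G q * hPadd

theorem hasDerivAt_sigmaOddPart_zero : HasDerivAt G 1 0 := by
  have hneg : HasDerivAt (fun w ↦ sigmaSeries 1 (-w)) (-1) 0 := by
    have h : HasDerivAt (sigmaSeries 1) 1 (-0) := by
      rw [neg_zero]
      exact hasDerivAt_sigmaSeries_zero 1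
    simpa using! h.comp (0 : ℂ) (hasDerivAt_neg 0)
  have h := ((hasDerivAt_sigmaSeries_zero 1).sub hneg).div_const 2
  refine (h.congr_deriv (by norm_num)).congr_of_eventuallyEq ?_
  filter_upwards [isOpen_ball.mem_nhds (mem_ball_self (x := (0 : ℂ)) one_pos)] with w hw
  rw [Pi.sub_apply, sigmaSeries_sub_neg 1 (mem_ball_zero_iff.mp hw), sigmaOddPart,
    mul_div_cancel_left₀ _ two_ne_zero]

/-- Euler's function `∏ (1 - qⁿ)`, `n ≥ 1`: the Dedekind eta function without its factor
`q^(1/24)`. -/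
def eulerFunction (q : ℂ) : ℂ := ∏' n : ℕ, (1 - q ^ (n + 1))

local notation "φ" => eulerFunction

theorem eulerFunction_zero : φ 0 = 1 := by
  simp [eulerFunction]

theorem eulerFunction_ne_zero (hq : ‖q‖ < 1) : φ q ≠ 0 := by
  rcases eq_or_ne q 0 with rfl | hq0
  · exact eulerFunction_zero ▸ one_ne_zero
  obtain ⟨z, rfl⟩ := exists_nome_eq hq hq0
  simpa only [eulerFunction, nome_eq_qParam, eta_q] using! eta_tprod_ne_zero z.im_pos

theorem hasEulerDerivAt_eulerFunction (hq : ‖q‖ < 1) :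
    HasEulerDerivAt φ (φ q * (P q - 1) / 24) q := by
  have hφ : HasEulerDerivAt φ (q * deriv φ q) q :=
    ⟨_, (differentiableOn_tprod_one_sub_pow.differentiableAt
      (isOpen_ball.mem_nhds (mem_ball_zero_iff.mpr hq))).hasDerivAt, rfl⟩
  refine hφ.congr_deriv ?_
  rcases eq_or_ne q 0 with rfl | hq0
  · simp [ramanujanP_zero]
  obtain ⟨z, rfl⟩ := exists_nome_eq hq hq0
  have hφz := eulerFunction_ne_zero hq
  have hcomp := hφ.hasDerivAt_comp_nome
  have heta : ModularForm.eta = fun τ ↦ Function.Periodic.qParam 24 τ * φ (nome τ) := by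
    funext τ
    simp only [ModularForm.eta, eulerFunction, nome_eq_qParam, eta_q]
  have h := logDeriv_eta_eq_E2 z
  rw [heta, logDeriv_mul (f := Function.Periodic.qParam 24) (g := fun τ ↦ φ (nome τ)) (z : ℂ)
    (Function.Periodic.qParam_ne_zero _) hφz (by fun_prop) hcomp.differentiableAt,
    logDeriv_qParam, logDeriv_apply, hcomp.deriv, E2_eq_ramanujanP] at h
  field_simp at h
  push_cast at h
  linear_combination (1 / 576 : ℂ) * h

theorem hasEulerDerivAt_eulerFunction_quotient (hq : ‖q‖ < 1) :
    HasEulerDerivAt (fun w ↦ φ (w ^ 2) ^ 4 / φ (w ^ 4) ^ 8)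
      (φ (q ^ 2) ^ 4 / φ (q ^ 4) ^ 8 * ((P (q ^ 2) - 4 * P (q ^ 4) + 3) / 3)) q := by
  have hq4 := norm_pow_lt_one hq four_ne_zero
  have hφ4 := eulerFunction_ne_zero hq4
  have hnum :=
    ((hasEulerDerivAt_eulerFunction (norm_pow_lt_one hq two_ne_zero)).pow 4).comp_pow 2
  have hden := ((hasEulerDerivAt_eulerFunction hq4).pow 8).comp_pow 4
  refine (hnum.div hden (pow_ne_zero 8 hφ4)).congr_deriv ?_
  field_simp
  push_cast
  ring

theorem sigmaOddPart_mul_eulerFunction_quotient (hq : ‖q‖ < 1) :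
    G q * (φ (q ^ 2) ^ 4 / φ (q ^ 4) ^ 8) = q := by
  have hself (w) (hw : w ∈ ball (0 : ℂ) 1) :
      HasEulerDerivAt (fun w ↦ G w * (φ (w ^ 2) ^ 4 / φ (w ^ 4) ^ 8))
        (G w * (φ (w ^ 2) ^ 4 / φ (w ^ 4) ^ 8)) w := by
    rw [mem_ball_zero_iff] at hw
    refine ((hasEulerDerivAt_sigmaOddPart hw).mul
      (hasEulerDerivAt_eulerFunction_quotient hw)).congr_deriv ?_
    rw [eisensteinTwo, ← pow_mul]
    ring
  have hderiv : deriv (fun w ↦ G w * (φ (w ^ 2) ^ 4 / φ (w ^ 4) ^ 8)) 0 = 1 := by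
    have hquot := (hasEulerDerivAt_eulerFunction_quotient (q := 0) (by simp)).differentiableAt
    have hG0 : G 0 = 0 := by simp [sigmaOddPart]
    simpa [eulerFunction_zero, hG0] using
      (hasDerivAt_sigmaOddPart_zero.fun_mul hquot.hasDerivAt).deriv
  rw [eq_deriv_zero_mul_of_hasEulerDerivAt_self hself q (mem_ball_zero_iff.mpr hq), hderiv, one_mul]

theorem sigmaOddPart_ne_zero (hq : ‖q‖ < 1) (hq0 : q ≠ 0) : G q ≠ 0 := fun h ↦
  hq0 (by rw [← sigmaOddPart_mul_eulerFunction_quotient hq, h, zero_mul])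

theorem hasEulerDerivAt_eisensteinTwo_div_sigmaOddPart (hq : ‖q‖ < 1) (hq0 : q ≠ 0) :
    HasEulerDerivAt (fun w ↦ F (w ^ 2) / G w) (-F (q ^ 2) * (F (q ^ 2) / G q) + 64 * G q) q := by
  have hG := sigmaOddPart_ne_zero hq hq0
  have hF := (hasEulerDerivAt_eisensteinTwo (norm_pow_lt_one hq two_ne_zero)).comp_pow 2
  refine (hF.div (hasEulerDerivAt_sigmaOddPart hq) hG).congr_deriv ?_
  field_simp
  push_cast
  linear_combination -6 * sigmaOddPart_sq hq

variable {τ : ℂ}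

theorem Estar_eq_eisensteinTwo (hτ : 0 < τ.im) : Estar τ = F (nome τ) := by
  have hq := norm_nome_lt_one hτ
  rw [Estar, eisensteinTwo_eq_one_add hq, sigmaOddPowSeries,
    (summable_sigmaOddPow_mul_pow 1 hq).tsum_eq_zero_add]
  simp only [sigmaOddPow_one]
  simp [sigmaOdd]

theorem Eodd_eq_sigmaOddPart (τ : ℂ) : Eodd τ = G (nome τ) := by
  simp only [Eodd, sigmaOddPart, sigma_one_apply]

theorem dedekindEta_pow_div_eq_eulerFunction_quotient (τ : ℂ) :
    dedekindEta (2 * τ) ^ 4 / dedekindEta (4 * τ) ^ 8 =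
      (nome τ)⁻¹ * (φ (nome τ ^ 2) ^ 4 / φ (nome τ ^ 4) ^ 8) := by
  have h2 := nome_natCast_mul 2 τ
  have h4 := nome_natCast_mul 4 τ
  push_cast at h2 h4
  have hexp : Complex.exp (π * I * (2 * τ) / 12) ^ 4 / Complex.exp (π * I * (4 * τ) / 12) ^ 8 =
      (nome τ)⁻¹ := by
    rw [nome, ← Complex.exp_nat_mul, ← Complex.exp_nat_mul, ← Complex.exp_sub, ← Complex.exp_neg]
    congr 1
    push_cast
    ring
  simp only [dedekindEta, h2, h4, mul_pow, eulerFunction, mul_div_mul_comm, hexp]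

theorem hfun_eq_eisensteinTwo_div_sigmaOddPart (hτ : 0 < τ.im) :
    hfun τ = F (nome τ ^ 2) / G (nome τ) := by
  have hq := norm_nome_lt_one hτ
  have h2 := nome_natCast_mul 2 τ
  push_cast at h2
  rw [hfun, dedekindEta_pow_div_eq_eulerFunction_quotient,
    Estar_eq_eisensteinTwo (τ := 2 * τ) (by simpa using hτ), h2,
    eq_div_iff (sigmaOddPart_ne_zero hq (nome_ne_zero τ))]
  linear_combination (nome τ)⁻¹ * F (nome τ ^ 2) * sigmaOddPart_mul_eulerFunction_quotient hq +
    F (nome τ ^ 2) * inv_mul_cancel₀ (nome_ne_zero τ)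

end Ramanujan

/-- For `τ ∈ ℍ`: `(q d/dq) h(τ) = −E*(2τ)h(τ) + 64 E_odd(τ)`, with `q d/dq = (2πi)⁻¹ d/dτ`. -/
theorem stmt12 (τ : ℂ) (hτ : 0 < τ.im) :
    (1 / (2 * (π : ℂ) * I)) * deriv hfun τ = -Estar (2 * τ) * hfun τ + 64 * Eodd τ := by
  have hq := norm_nome_lt_one hτ
  have h2τ : nome (2 * τ) = nome τ ^ 2 := by exact_mod_cast nome_natCast_mul 2 τ
  have heq : hfun =ᶠ[nhds τ] fun z ↦ eisensteinTwo (nome z ^ 2) / sigmaOddPart (nome z) := by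
    filter_upwards [UpperHalfPlane.isOpen_upperHalfPlaneSet.mem_nhds hτ] with z hz
    exact hfun_eq_eisensteinTwo_div_sigmaOddPart hz
  have hderiv := (hasEulerDerivAt_eisensteinTwo_div_sigmaOddPart hq
    (nome_ne_zero τ)).hasDerivAt_comp_nome
  rw [heq.deriv_eq, hderiv.deriv, hfun_eq_eisensteinTwo_div_sigmaOddPart hτ,
    Estar_eq_eisensteinTwo (τ := 2 * τ) (by simpa using hτ), h2τ, Eodd_eq_sigmaOddPart, one_div,
    inv_mul_cancel_left₀ two_pi_I_ne_zero]
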